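/- arXiv:0801.0054 — 3 statements merged into one kernel-verified Lean document; each statement's English description precedes it below -/
import Mathlib

section
/- For every n ≥ 1 and every j with 1 ≤ j ≤ 2^(n-1), one has x_{2^(n-1)+1−j}^(n) = 1 / x_j^(n); that is, the n-th generation of the Calkin–Wilf tree is symmetric about its middle under taking reciprocals. -/
/-- The generations of the Calkin–Wilf tree: `CW 0 = [1/1]` is the first
generation, and each generation is obtained from the previous one by replacing
each entry `x` by `x/(x+1)` and `x+1`, in this order.  Thus the `n`-th
generation of the paper is `CW (n-1)`, whose `j`-th entry (1-based) is
`(CW (n-1)).getD (j-1) 0`. -/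
def CW : ℕ → List ℚ
  | 0 => [1]
  | n + 1 => (CW n).flatMap (fun x => [x / (x + 1), x + 1])

/-! Taking reciprocals sends the children of `x` to those of `x⁻¹` in reverse order, since
`(x / (x + 1))⁻¹ = x⁻¹ + 1` and `(x + 1)⁻¹ = x⁻¹ / (x⁻¹ + 1)`. By induction, reversing a generation
is the same as inverting all of its entries. -/

section Reverse

variable {α β : Type*}

theorem reverse_flatMap_of_reverse_eq_map {l : List α} {σ : α → α} {τ : β → β} {f : α → List β}
    (hl : l.reverse = l.map σ) (hf : ∀ x ∈ l, (f (σ x)).reverse = (f x).map τ) :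
    (l.flatMap f).reverse = (l.flatMap f).map τ := by
  rw [List.reverse_flatMap, hl, List.flatMap_map, List.map_flatMap]
  exact List.flatMap_congr hf

theorem getD_length_sub_one_sub_of_reverse_eq_map {l : List α} {σ : α → α}
    (hl : l.reverse = l.map σ) {i : ℕ} (hi : i < l.length) (d : α) :
    l.getD (l.length - 1 - i) d = σ (l.getD i d) := by
  calc l.getD (l.length - 1 - i) d
      = l.reverse.getD i d := by rw [List.getD_reverse i hi]
    _ = (l.map σ).getD i d := by rw [hl]
    _ = (l.map σ).getD i (σ d) := by simp [hi]
    _ = σ (l.getD i d) := List.getD_map l d σ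

end Reverse

theorem inv_div_add_one {K : Type*} [DivisionSemiring K] {x : K} (hx : x ≠ 0) :
    (x / (x + 1))⁻¹ = x⁻¹ + 1 := by
  rw [inv_div, add_div, div_self hx, one_div, add_comm]

namespace CW

theorem pos_of_mem {n : ℕ} {x : ℚ} (hx : x ∈ CW n) : 0 < x := by
  induction n generalizing x with
  | zero => simp_all [CW]
  | succ n ih =>
    simp only [CW, List.mem_flatMap, List.mem_pair] at hx
    obtain ⟨y, hy, rfl | rfl⟩ := hx
    all_goals
      have hpos : 0 < y := ih hy
      positivity

theorem length_eq_two_pow (n : ℕ) : (CW n).length = 2 ^ n := by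
  induction n with
  | zero => rfl
  | succ n ih => simp [CW, List.length_flatMap, ih, pow_succ]

theorem reverse_eq_map_inv (n : ℕ) : (CW n).reverse = (CW n).map (·⁻¹) := by
  induction n with
  | zero => simp [CW]
  | succ n ih =>
    refine reverse_flatMap_of_reverse_eq_map ih fun x hx => ?_
    have hx0 : x ≠ 0 := (pos_of_mem hx).ne'
    have inv_left_child : (x / (x + 1))⁻¹ = x⁻¹ + 1 := inv_div_add_one hx0
    have inv_right_child : (x + 1)⁻¹ = x⁻¹ / (x⁻¹ + 1) := by
      rw [inv_eq_iff_eq_inv, inv_div_add_one (inv_ne_zero hx0), inv_inv]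
    simp only [List.reverse_cons, List.reverse_nil, List.nil_append, List.cons_append,
      List.map_cons, List.map_nil, inv_left_child, inv_right_child]

end CW

/-- The `n`-th generation of the Calkin–Wilf tree is symmetric about its middle
under taking reciprocals: `x_{2^(n-1)+1-j}^(n) = 1 / x_j^(n)` for
`1 ≤ j ≤ 2^(n-1)`. -/
theorem calkin_wilf_reciprocal_symmetry (n : ℕ) (hn : 1 ≤ n)
    (j : ℕ) (hj1 : 1 ≤ j) (hj2 : j ≤ 2 ^ (n - 1)) :
    (CW (n - 1)).getD (2 ^ (n - 1) - j) 0 = ((CW (n - 1)).getD (j - 1) 0)⁻¹ := by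
  have hlen := CW.length_eq_two_pow (n - 1)
  have hsymm := getD_length_sub_one_sub_of_reverse_eq_map (CW.reverse_eq_map_inv (n - 1))
    (show j - 1 < (CW (n - 1)).length by omega) 0
  rwa [hlen, show 2 ^ (n - 1) - 1 - (j - 1) = 2 ^ (n - 1) - j by omega] at hsymm
end

section
/- Let 0 ≤ α < β be real numbers and let c_0, c_1, …, c_m be positive integers with c_m ≥ 2 (and c_0 ≥ 0 allowed). Then there exist an integer k ≥ 0 and integers d_0 ≥ 0, d_1, …, d_k ≥ 1 such that the rational number x = [d_0, d_1, …, d_k, c_0, c_1, …, c_m], whose continued fraction expansion ends with the block c_0, c_1, …, c_m, satisfies α < x < β. (Equivalently: every finite path in the Calkin–Wilf tree admits a continuation that reaches a rational in the interval (α, β).) -/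
/-- The value of the finite continued fraction
`[a₀, a₁, …, a_m] = a₀ + 1/(a₁ + 1/(⋯ + 1/a_m))`, given as the list
`[a₀, a₁, …, a_m]` of its partial quotients. -/
def cfVal : List ℕ → ℚ
  | [] => 0
  | [a] => (a : ℚ)
  | a :: l => (a : ℚ) + (cfVal l)⁻¹

/-!
A rational `q ≥ 0` strictly between `α` and `β` has a finite continued fraction expansion
`q = [d₀, …, d_k]`. As `N → ∞`, the tails `[N, c₀, …, c_m]` tend to infinity, so
`[d₀, …, d_k, N, c₀, …, c_m]` tends to `q` and eventually lies between `α` and `β`.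
-/

open Filter Topology

-- The case `l = []` relies on `cfVal [] = 0` and `0⁻¹ = 0`.
theorem cfVal_cons (a : ℕ) (l : List ℕ) : cfVal (a :: l) = a + (cfVal l)⁻¹ := by
  cases l with
  | nil => simp [cfVal]
  | cons b l => rfl

theorem cfVal_nonneg (l : List ℕ) : 0 ≤ cfVal l := by
  induction l with
  | nil => rfl
  | cons a l ih =>
    rw [cfVal_cons]
    positivity

theorem natCast_le_cfVal_cons (a : ℕ) (l : List ℕ) : (a : ℚ) ≤ cfVal (a :: l) := by
  rw [cfVal_cons]
  exact le_add_of_nonneg_right (inv_nonneg.2 (cfVal_nonneg l))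

theorem tendsto_cfVal_cons_atTop (C : List ℕ) :
    Tendsto (fun N : ℕ => cfVal (N :: C)) atTop atTop :=
  tendsto_atTop_mono (fun N => natCast_le_cfVal_cons N C) tendsto_natCast_atTop_atTop

theorem tendsto_cfVal_cons_append {ι : Type*} {f : Filter ι} {L : ι → List ℕ}
    (hL : Tendsto (fun i => cfVal (L i)) f atTop) (a : ℕ) {D : List ℕ} (hD : ∀ d ∈ D, 1 ≤ d) :
    Tendsto (fun i => cfVal (a :: D ++ L i)) f (𝓝 (cfVal (a :: D))) := by
  induction D generalizing a with
  | nil => simpa [cfVal_cons, cfVal] using (tendsto_inv_atTop_zero.comp hL).const_add (a : ℚ)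
  | cons d D ih =>
    obtain ⟨hd, hD⟩ := List.forall_mem_cons.1 hD
    have cfVal_ne_zero : cfVal (d :: D) ≠ 0 :=
      ((Nat.cast_pos.2 hd).trans_le (natCast_le_cfVal_cons d D)).ne'
    simp only [List.cons_append, cfVal_cons a]
    exact ((ih d hD).inv₀ cfVal_ne_zero).const_add _

theorem exists_cfVal_floor_cons_eq {q : ℚ} (hq : 0 ≤ q) :
    ∃ D : List ℕ, (∀ d ∈ D, 1 ≤ d) ∧ cfVal (⌊q⌋₊ :: D) = q := by
  -- The numerator of the fractional part is the remainder in the Euclidean algorithm.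
  induction h : (Int.fract q).num.toNat using Nat.strong_induction_on generalizing q with
  | _ n ih =>
    subst h
    have floor_add_fract : (⌊q⌋₊ : ℚ) + Int.fract q = q := by
      rw [natCast_floor_eq_intCast_floor hq, Int.floor_add_fract]
    obtain hfract | hfract := (Int.fract_nonneg q).eq_or_lt
    · exact ⟨[], by simp, by simpa [cfVal, ← hfract] using floor_add_fract⟩
    · have num_lt : (Int.fract (Int.fract q)⁻¹).num.toNat < (Int.fract q).num.toNat :=
        (Int.toNat_lt_toNat (Rat.num_pos.2 hfract)).2 (Rat.fract_inv_num_lt_num_of_pos hfract)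
      obtain ⟨D, hD, hval⟩ := ih _ num_lt (inv_nonneg.2 hfract.le) rfl
      have one_le_floor : 1 ≤ ⌊(Int.fract q)⁻¹⌋₊ :=
        (Nat.one_le_floor_iff _).2 ((one_le_inv₀ hfract).2 (Int.fract_lt_one q).le)
      refine ⟨⌊(Int.fract q)⁻¹⌋₊ :: D, List.forall_mem_cons.2 ⟨one_le_floor, hD⟩, ?_⟩
      rw [cfVal_cons, hval, inv_inv, floor_add_fract]

theorem exists_cfVal_append_mem_of_mem_nhds (C : List ℕ) {q : ℚ} (hq : 0 ≤ q) {U : Set ℚ}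
    (hU : U ∈ 𝓝 q) :
    ∃ D : List ℕ, D ≠ [] ∧ (∀ d ∈ D.tail, 1 ≤ d) ∧ cfVal (D ++ C) ∈ U := by
  obtain ⟨D, hD, hval⟩ := exists_cfVal_floor_cons_eq hq
  have tendsto_q := tendsto_cfVal_cons_append (tendsto_cfVal_cons_atTop C) ⌊q⌋₊ hD
  rw [hval] at tendsto_q
  obtain ⟨N, hN, one_le_N⟩ := ((tendsto_q.eventually_mem hU).and (eventually_ge_atTop 1)).exists
  refine ⟨⌊q⌋₊ :: (D ++ [N]), List.cons_ne_nil _ _, ?_, by simpa using hN⟩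
  exact List.forall_mem_append.2 ⟨hD, List.forall_mem_singleton.2 one_le_N⟩

-- If `C` ended in `0`, its value would be computed with the convention `0⁻¹ = 0`.
theorem continued_fraction_tail_dense_general {K : Type*} [Field K] [LinearOrder K]
    [IsStrictOrderedRing K] [Archimedean K] {α β : K} (hβ : 0 < β) (hαβ : α < β)
    (C : List ℕ) (hC : C ≠ []) (hClast : 0 < C.getLast hC) :
    ∃ D : List ℕ, D ≠ [] ∧ (∀ d ∈ D.tail, 1 ≤ d) ∧
      α < (cfVal (D ++ C) : K) ∧ (cfVal (D ++ C) : K) < β := by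
  obtain ⟨s, hs, hsβ⟩ := exists_rat_btwn (max_lt hαβ hβ)
  obtain ⟨r, hr, hrs⟩ := exists_rat_btwn hs
  obtain ⟨hαr, hr_pos⟩ := max_lt_iff.1 hr
  obtain ⟨q, hrq, hqs⟩ := exists_between (Rat.cast_lt.1 hrs)
  have hq : 0 ≤ q := ((Rat.cast_pos.1 hr_pos).trans hrq).le
  obtain ⟨D, hD, hDtail, hlower, hupper⟩ :=
    exists_cfVal_append_mem_of_mem_nhds C hq (Ioo_mem_nhds hrq hqs)
  exact ⟨D, hD, hDtail, hαr.trans (Rat.cast_lt.2 hlower), (Rat.cast_lt.2 hupper).trans hsβ⟩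

/-- Given `0 ≤ α < β` and a block `c₀, c₁, …, c_m` of partial quotients
(`c_j ≥ 1` for `j ≥ 1`, `c_m ≥ 2`, `c₀ ≥ 0` allowed), there are `k ≥ 0` and
`d₀ ≥ 0`, `d₁, …, d_k ≥ 1` such that the rational
`x = [d₀, d₁, …, d_k, c₀, c₁, …, c_m]`, whose continued fraction expansion ends
with the given block, satisfies `α < x < β`.  (Every finite path in the
Calkin–Wilf tree admits a continuation reaching a rational in `(α, β)`.) -/
theorem continued_fraction_tail_dense (α β : ℝ) (hα : 0 ≤ α) (hαβ : α < β)
    (C : List ℕ) (hC : C ≠ []) (hCtail : ∀ c ∈ C.tail, 1 ≤ c)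
    (hClast : 2 ≤ C.getLast hC) :
    ∃ D : List ℕ, D ≠ [] ∧ (∀ d ∈ D.tail, 1 ≤ d) ∧
      α < (cfVal (D ++ C) : ℝ) ∧ (cfVal (D ++ C) : ℝ) < β :=
  continued_fraction_tail_dense_general (hα.trans_lt hαβ) hαβ C hC (two_pos.trans_le hClast)
end

section
/- There exists a function F : [0,∞) → ℝ which is nondecreasing and continuous, with F(0) = 0 and F(x) → 1 as x → ∞, satisfying the functional equations 2F(x) = F(x−1) + 1 for all x ≥ 1 and 2F(x) = F(x/(1−x)) for all 0 < x < 1, and such that for every n ≥ 1 and every x ≥ 0, |F(x) − F_n(x)| ≤ 2^(−n); in particular F_n converges uniformly to F. -/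
/-!
If `f` is the distribution function of `ξ`, then that of a uniformly random child of `ξ`, that is of
`ξ / (ξ + 1)` or `ξ + 1` with probability `1/2` each, is `T f` for an explicit affine operator `T`
that halves uniform distances. Hence `F_{n+1} = T F_n`, and the `F_n` converge to a fixed point `F`
of `T`, monotone with values in `[0, 1]`. The functional equations are `T F = F`, and
`|F - F_1| ≤ 1/2` improves to `|F - F_n| ≤ 2^(-n)` by contraction. The fixed-point equation also
doubles the precision with which `F` approximates points of `[0, 1]`, so `F` has dense range there;
for a monotone function this gives both continuity and the limit `1` at infinity.
-/

open Filter

open scoped Classical in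
/-- `Fcw n` is the distribution function of the `(n+1)`-st generation of the
Calkin–Wilf tree: `Fcw (n-1) x = F_n(x) = 2^(1-n) · #{j : x_j^(n) ≤ x}`. -/
noncomputable def Fcw (n : ℕ) (x : ℝ) : ℝ :=
  ((CW n).countP (fun q => decide ((q : ℝ) ≤ x))) / 2 ^ n

open Function Set Topology

lemma continuous_of_monotone_of_subset_closure_range {α β : Type*} [LinearOrder α]
    [TopologicalSpace α] [OrderTopology α] [LinearOrder β] [TopologicalSpace β] [OrderTopology β]
    [DenselyOrdered β] {f : α → β} {s : Set β} [s.OrdConnected] (hf : Monotone f)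
    (hfs : ∀ x, f x ∈ s) (hs : s ⊆ closure (range f)) : Continuous f := by
  have hmono : Monotone (codRestrict f s hfs) := fun _ _ hxy => hf hxy
  have hdense : DenseRange (codRestrict f s hfs) := by
    refine Subtype.dense_iff.2 ?_
    rwa [← range_comp]
  exact continuous_subtype_val.comp (hmono.continuous_of_denseRange hdense)

section Counting

variable {K : Type*} [Field K] [LinearOrder K] [IsStrictOrderedRing K] {a x : K} {l : List K}

lemma div_add_one_le_iff_of_lt_one (ha : 0 ≤ a) (hx : x < 1) :
    a / (a + 1) ≤ x ↔ a ≤ x / (1 - x) := by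
  rw [div_le_iff₀ (by positivity), le_div_iff₀ (sub_pos.2 hx)]
  constructor <;> intro h <;> linarith

lemma countP_le_children_of_lt_one (hl : ∀ a ∈ l, 0 ≤ a) (hx : x < 1) :
    (l.flatMap fun a => [a / (a + 1), a + 1]).countP (· ≤ x) = l.countP (· ≤ x / (1 - x)) := by
  induction l with
  | nil => rfl
  | cons a l ih =>
    obtain ⟨ha, hl⟩ := List.forall_mem_cons.1 hl
    have hright : ¬ a + 1 ≤ x := by linarith
    rw [List.flatMap_cons, List.countP_append, ih hl]
    simp [List.countP_cons, div_add_one_le_iff_of_lt_one ha hx, hright, add_comm]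

lemma countP_le_children_of_one_le (hl : ∀ a ∈ l, 0 ≤ a) (hx : 1 ≤ x) :
    (l.flatMap fun a => [a / (a + 1), a + 1]).countP (· ≤ x) =
      l.countP (· ≤ x - 1) + l.length := by
  induction l with
  | nil => rfl
  | cons a l ih =>
    obtain ⟨ha, hl⟩ := List.forall_mem_cons.1 hl
    have hleft : a / (a + 1) ≤ x :=
      (div_le_one_of_le₀ (by linarith) (by positivity)).trans hx
    rw [List.flatMap_cons, List.countP_append, ih hl]
    simp only [List.countP_cons, List.countP_nil, List.length_cons, hleft, ← le_sub_iff_add_le,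
      decide_true, if_true]
    omega

end Counting

lemma map_cast_CW_succ {K : Type*} [DivisionRing K] [CharZero K] (n : ℕ) :
    (CW (n + 1)).map ((↑) : ℚ → K) =
      ((CW n).map ((↑) : ℚ → K)).flatMap fun a => [a / (a + 1), a + 1] := by
  simp [CW, List.map_flatMap, List.flatMap_map]

lemma CW_pos (n : ℕ) : ∀ q ∈ CW n, 0 < q := by
  induction n with
  | zero => simp [CW]
  | succ n ih =>
    intro q hq
    obtain ⟨a, ha, hq⟩ := List.mem_flatMap.1 hq
    have ha_pos : 0 < a := ih a ha
    obtain rfl | rfl : q = a / (a + 1) ∨ q = a + 1 := by simpa using hq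
    all_goals positivity

lemma length_CW (n : ℕ) : (CW n).length = 2 ^ n := by
  induction n with
  | zero => rfl
  | succ n ih => simp [CW, List.length_flatMap, ih, pow_succ]

-- In `Fcw` the list `CW n` is coerced to `List ℝ`, which elaborates to a monadic bind.
lemma Fcw_eq_countP_map (n : ℕ) (x : ℝ) :
    Fcw n x = ((CW n).map ((↑) : ℚ → ℝ)).countP (· ≤ x) / 2 ^ n := by
  simp only [Fcw, List.bind_eq_flatMap, List.pure_def, List.map_eq_flatMap]

lemma Fcw_mono (n : ℕ) : Monotone (Fcw n) := by
  intro x y hxy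
  simp only [Fcw_eq_countP_map]
  gcongr
  refine List.countP_mono_left fun q _ hq => ?_
  simp only [decide_eq_true_eq] at hq ⊢
  exact hq.trans hxy

lemma Fcw_mem_Icc (n : ℕ) (x : ℝ) : Fcw n x ∈ Icc 0 1 := by
  rw [Fcw_eq_countP_map]
  refine ⟨by positivity, div_le_one_of_le₀ ?_ (by positivity)⟩
  have hcount := List.countP_le_length (p := (· ≤ x)) (l := (CW n).map ((↑) : ℚ → ℝ))
  rw [List.length_map, length_CW] at hcount
  exact_mod_cast hcount

lemma Fcw_zero_apply (x : ℝ) : Fcw 0 x = if x < 1 then 0 else 1 := by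
  simp [Fcw_eq_countP_map, CW, List.countP_cons, ← not_lt]

/-- The operator sending the distribution function of a nonnegative random variable `ξ` to the
distribution function of a random child of `ξ` in the Calkin–Wilf tree, the children
`ξ / (ξ + 1)` and `ξ + 1` having probability `1/2` each. It is defined on all functions `ℝ → ℝ`. -/
noncomputable def childCDF (f : ℝ → ℝ) (x : ℝ) : ℝ :=
  if x < 1 then f (x / (1 - x)) / 2 else (f (x - 1) + 1) / 2

lemma Fcw_succ (n : ℕ) : Fcw (n + 1) = childCDF (Fcw n) := by
  have hnonneg : ∀ a ∈ (CW n).map ((↑) : ℚ → ℝ), 0 ≤ a :=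
    List.forall_mem_map.2 fun q hq => Rat.cast_nonneg.2 (CW_pos n q hq).le
  ext x
  simp only [childCDF, Fcw_eq_countP_map, map_cast_CW_succ]
  split_ifs with hx
  · rw [countP_le_children_of_lt_one hnonneg hx, pow_succ, div_div]
  · rw [countP_le_children_of_one_le hnonneg (not_lt.1 hx), List.length_map, length_CW, pow_succ]
    push_cast
    field_simp

lemma Fcw_eq_iterate (n : ℕ) : Fcw n = childCDF^[n] (Fcw 0) := by
  induction n with
  | zero => rfl
  | succ n ih => rw [Fcw_succ, ih, iterate_succ_apply']

section ChildCDF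

variable {f g : ℝ → ℝ} {C : ℝ}

lemma abs_childCDF_sub_childCDF_le (h : ∀ x, |f x - g x| ≤ C) (x : ℝ) :
    |childCDF f x - childCDF g x| ≤ C / 2 := by
  unfold childCDF
  split_ifs
  · rw [← sub_div, abs_div, abs_two]
    gcongr
    exact h _
  · rw [← sub_div, add_sub_add_right_eq_sub, abs_div, abs_two]
    gcongr
    exact h _

lemma abs_iterate_childCDF_sub_le (h : ∀ x, |f x - g x| ≤ C) (n : ℕ) (x : ℝ) :
    |childCDF^[n] f x - childCDF^[n] g x| ≤ C / 2 ^ n := by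
  induction n generalizing x with
  | zero => simpa using h x
  | succ n ih =>
    simp only [iterate_succ_apply', pow_succ, ← div_div]
    exact abs_childCDF_sub_childCDF_le ih x

lemma cauchySeq_iterate_childCDF (h : ∀ x, |f x - childCDF f x| ≤ C) (x : ℝ) :
    CauchySeq fun n => childCDF^[n] f x := by
  refine cauchySeq_of_le_geometric (1 / 2) C (by norm_num) fun n => ?_
  rw [Real.dist_eq, iterate_succ_apply, one_div_pow, mul_one_div]
  exact abs_iterate_childCDF_sub_le h n x

lemma continuous_childCDF : Continuous childCDF := by
  refine continuous_pi fun x => ?_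
  unfold childCDF
  split_ifs <;> fun_prop

end ChildCDF

namespace childCDF

variable {F : ℝ → ℝ}

lemma two_mul_fixedPt_of_lt_one (hF : IsFixedPt childCDF F) {x : ℝ} (hx : x < 1) :
    2 * F x = F (x / (1 - x)) := by
  conv_lhs => rw [← hF.eq, childCDF, if_pos hx]
  ring

lemma two_mul_fixedPt_of_one_le (hF : IsFixedPt childCDF F) {x : ℝ} (hx : 1 ≤ x) :
    2 * F x = F (x - 1) + 1 := by
  conv_lhs => rw [← hF.eq, childCDF, if_neg hx.not_gt]
  ring

lemma two_mul_fixedPt_div_add_one (hF : IsFixedPt childCDF F) {t : ℝ} (ht : 0 ≤ t) :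
    2 * F (t / (t + 1)) = F t := by
  have hlt : t / (t + 1) < 1 := (div_lt_one (by positivity)).2 (lt_add_one t)
  have hinv : t / (t + 1) / (1 - t / (t + 1)) = t := by
    field_simp
    ring
  rw [two_mul_fixedPt_of_lt_one hF hlt, hinv]

lemma two_mul_fixedPt_add_one (hF : IsFixedPt childCDF F) {t : ℝ} (ht : 0 ≤ t) :
    2 * F (t + 1) = F t + 1 := by
  rw [two_mul_fixedPt_of_one_le hF (le_add_of_nonneg_left ht), add_sub_cancel_right]

lemma fixedPt_zero (hF : IsFixedPt childCDF F) : F 0 = 0 := by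
  have h := two_mul_fixedPt_of_lt_one hF zero_lt_one
  rw [zero_div] at h
  linarith

lemma fixedPt_one (hF : IsFixedPt childCDF F) : F 1 = 1 / 2 := by
  have h := two_mul_fixedPt_of_one_le hF le_rfl
  rw [sub_self, fixedPt_zero hF] at h
  linarith

lemma exists_nonneg_abs_fixedPt_sub_le (hF : IsFixedPt childCDF F) (n : ℕ) {y : ℝ}
    (hy : y ∈ Icc 0 1) : ∃ x, 0 ≤ x ∧ |F x - y| ≤ 1 / 2 ^ n := by
  induction n generalizing y with
  | zero =>
    refine ⟨0, le_rfl, ?_⟩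
    rw [fixedPt_zero hF, zero_sub, abs_neg, abs_of_nonneg hy.1]
    simpa using hy.2
  | succ n ih =>
    rw [pow_succ, ← div_div]
    rcases le_total y (1 / 2) with hle | hge
    · obtain ⟨t, ht, hFt⟩ := ih (y := 2 * y) ⟨by linarith [hy.1], by linarith⟩
      refine ⟨t / (t + 1), by positivity, ?_⟩
      rw [← two_mul_fixedPt_div_add_one hF ht, ← mul_sub, abs_mul, abs_two] at hFt
      linarith
    · obtain ⟨t, ht, hFt⟩ := ih (y := 2 * y - 1) ⟨by linarith, by linarith [hy.2]⟩
      refine ⟨t + 1, by positivity, ?_⟩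
      rw [sub_sub_eq_add_sub, ← two_mul_fixedPt_add_one hF ht, ← mul_sub, abs_mul, abs_two] at hFt
      linarith

lemma Icc_subset_closure_range_fixedPt (hF : IsFixedPt childCDF F) :
    Icc 0 1 ⊆ closure (range F) := by
  intro y hy
  refine Metric.mem_closure_range_iff.2 fun ε hε => ?_
  obtain ⟨n, hn⟩ := exists_pow_lt_of_lt_one hε (one_half_lt_one (α := ℝ))
  obtain ⟨x, -, hx⟩ := exists_nonneg_abs_fixedPt_sub_le hF n hy
  refine ⟨x, ?_⟩
  rw [dist_comm, Real.dist_eq]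
  exact hx.trans_lt (by rwa [← one_div_pow])

lemma abs_fixedPt_sub_Fcw_le (hF : IsFixedPt childCDF F) (hmono : Monotone F)
    (hF_mem : ∀ x, F x ∈ Icc 0 1) (n : ℕ) (x : ℝ) : |F x - Fcw n x| ≤ 1 / 2 ^ (n + 1) := by
  have hF_one := fixedPt_one hF
  have hinit (x : ℝ) : |F x - Fcw 0 x| ≤ 1 / 2 := by
    rw [Fcw_zero_apply, abs_le]
    split_ifs with hx
    · constructor <;> linarith [(hF_mem x).1, hmono hx.le]
    · constructor <;> linarith [(hF_mem x).2, hmono (not_lt.1 hx)]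
  have hiter := abs_iterate_childCDF_sub_le hinit n x
  rwa [(hF.iterate n).eq, ← Fcw_eq_iterate, div_div, ← pow_succ'] at hiter

end childCDF

/-- The distribution function of the limit of the generations of the Calkin–Wilf tree, as the
pointwise limit of the functions `Fcw n`. -/
noncomputable def limitCDF (x : ℝ) : ℝ :=
  limUnder atTop fun n => Fcw n x

lemma tendsto_Fcw (x : ℝ) : Tendsto (fun n => Fcw n x) atTop (𝓝 (limitCDF x)) := by
  have hinit (x : ℝ) : |Fcw 0 x - childCDF (Fcw 0) x| ≤ 1 := by
    rw [← Fcw_succ]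
    exact Real.dist_le_of_mem_Icc_01 (Fcw_mem_Icc 0 x) (Fcw_mem_Icc 1 x)
  have hcauchy : CauchySeq fun n => Fcw n x := by
    simpa only [← Fcw_eq_iterate] using cauchySeq_iterate_childCDF hinit x
  exact hcauchy.tendsto_limUnder

lemma limitCDF_mono : Monotone limitCDF := fun x y hxy =>
  le_of_tendsto_of_tendsto' (tendsto_Fcw x) (tendsto_Fcw y) fun n => Fcw_mono n hxy

lemma limitCDF_mem_Icc (x : ℝ) : limitCDF x ∈ Icc 0 1 :=
  isClosed_Icc.mem_of_tendsto (tendsto_Fcw x) (.of_forall fun n => Fcw_mem_Icc n x)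

lemma isFixedPt_limitCDF : IsFixedPt childCDF limitCDF := by
  refine isFixedPt_of_tendsto_iterate (x := Fcw 0) ?_ continuous_childCDF.continuousAt
  simpa only [← Fcw_eq_iterate] using tendsto_pi_nhds.2 tendsto_Fcw

lemma continuous_limitCDF : Continuous limitCDF :=
  continuous_of_monotone_of_subset_closure_range limitCDF_mono limitCDF_mem_Icc
    (childCDF.Icc_subset_closure_range_fixedPt isFixedPt_limitCDF)

lemma tendsto_limitCDF_atTop : Tendsto limitCDF atTop (𝓝 1) :=
  tendsto_atTop_isLUB limitCDF_mono <| isLUB_of_mem_closure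
    (forall_mem_range.2 fun x => (limitCDF_mem_Icc x).2)
    (childCDF.Icc_subset_closure_range_fixedPt isFixedPt_limitCDF (right_mem_Icc.2 zero_le_one))

/-- There is a nondecreasing continuous function `F` on `[0,∞)` with `F(0)=0`,
`F(x) → 1` as `x → ∞`, satisfying `2F(x) = F(x−1) + 1` for `x ≥ 1` and
`2F(x) = F(x/(1−x))` for `0 < x < 1`, and with `|F(x) − F_n(x)| ≤ 2^(−n)` for
all `n ≥ 1` and `x ≥ 0`; in particular the generation distribution functions
`F_n` converge uniformly to `F`. -/
theorem calkin_wilf_limit_distribution_exists :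
    ∃ F : ℝ → ℝ, MonotoneOn F (Set.Ici 0) ∧ ContinuousOn F (Set.Ici 0) ∧
      F 0 = 0 ∧ Tendsto F atTop (nhds 1) ∧
      (∀ x : ℝ, 1 ≤ x → 2 * F x = F (x - 1) + 1) ∧
      (∀ x : ℝ, 0 < x → x < 1 → 2 * F x = F (x / (1 - x))) ∧
      (∀ n : ℕ, 1 ≤ n → ∀ x : ℝ, 0 ≤ x →
        |F x - Fcw (n - 1) x| ≤ 2 ^ (-(n : ℤ))) := by
  refine ⟨limitCDF, limitCDF_mono.monotoneOn _, continuous_limitCDF.continuousOn,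
    childCDF.fixedPt_zero isFixedPt_limitCDF, tendsto_limitCDF_atTop,
    fun x hx => childCDF.two_mul_fixedPt_of_one_le isFixedPt_limitCDF hx,
    fun x _ hx => childCDF.two_mul_fixedPt_of_lt_one isFixedPt_limitCDF hx, fun n hn x _ => ?_⟩
  have hbound := childCDF.abs_fixedPt_sub_Fcw_le isFixedPt_limitCDF limitCDF_mono
    limitCDF_mem_Icc (n - 1) x
  rw [Nat.sub_add_cancel hn] at hbound
  simpa [zpow_neg] using hbound
end
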